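/- Let Δ > 0 and let τ be uniformly distributed on [-Δ/2, Δ/2]. Then for every a ∈ ℝ, the dithered uniform quantizer is unbiased: E_τ[Q_Δ(a+τ)] = a. -/

import Mathlib

/-! Averaging `Q_Δ` over an interval of length `Δ` amounts to averaging `⌊·⌋` over an interval of
length one. The fractional part is periodic with mean `1/2`, so the floor has mean
`(c + 1/2) - 1/2 = c` over `[c, c + 1]`, and the offset `1/2` in `Q_Δ` turns this value into the
midpoint of the interval. -/

open MeasureTheory

/-- The uniform quantizer `Q_Δ(t) = Δ(⌊t/Δ⌋ + 1/2)`. -/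
noncomputable def uniformQuantizer (Δ : ℝ) (t : ℝ) : ℝ :=
  Δ * ((⌊t / Δ⌋ : ℤ) + 1 / 2)

/-- The uniform probability measure on the interval `[-Δ/2, Δ/2]`. -/
noncomputable def uniformDither (Δ : ℝ) : Measure ℝ :=
  (ENNReal.ofReal Δ)⁻¹ • volume.restrict (Set.Icc (-(Δ / 2)) (Δ / 2))

theorem intervalIntegrable_floor (μ : Measure ℝ) [IsLocallyFiniteMeasure μ] (a b : ℝ) :
    IntervalIntegrable (fun x : ℝ ↦ (⌊x⌋ : ℝ)) μ a b :=
  (Int.cast_mono.comp Int.floor_mono).intervalIntegrable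

theorem integral_fract_add_one (c : ℝ) : ∫ x in c..c + 1, Int.fract x = 1 / 2 :=
  calc
    ∫ x in c..c + 1, Int.fract x = ∫ x in (0 : ℝ)..0 + 1, Int.fract x :=
      (Int.fract_periodic ℝ).intervalIntegral_add_eq c 0
    _ = ∫ x in (0 : ℝ)..1, Int.fract x := by rw [zero_add]
    _ = ∫ x in (0 : ℝ)..1, x :=
      intervalIntegral.integral_congr_Ioo_of_le zero_le_one fun _ hx ↦
        Int.fract_eq_self.2 ⟨hx.1.le, hx.2⟩
    _ = 1 / 2 := by norm_num [integral_id]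

theorem integral_floor_add_one (c : ℝ) : ∫ x in c..c + 1, (⌊x⌋ : ℝ) = c := by
  have h_id : IntervalIntegrable (fun x : ℝ ↦ x) volume c (c + 1) :=
    intervalIntegral.intervalIntegrable_id
  have h_fract : IntervalIntegrable (fun x : ℝ ↦ Int.fract x) volume c (c + 1) :=
    h_id.sub (intervalIntegrable_floor volume c (c + 1))
  calc
    ∫ x in c..c + 1, (⌊x⌋ : ℝ) = ∫ x in c..c + 1, (x - Int.fract x) := by
      simp only [Int.self_sub_fract]
    _ = (∫ x in c..c + 1, x) - ∫ x in c..c + 1, Int.fract x :=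
      intervalIntegral.integral_sub h_id h_fract
    _ = ((c + 1) ^ 2 - c ^ 2) / 2 - 1 / 2 := by rw [integral_id, integral_fract_add_one]
    _ = c := by ring

theorem integral_uniformQuantizer_add_step {Δ : ℝ} (hΔ : Δ ≠ 0) (b : ℝ) :
    ∫ t in b..b + Δ, uniformQuantizer Δ t = Δ * (b + Δ / 2) :=
  calc
    ∫ t in b..b + Δ, uniformQuantizer Δ t
        = Δ * ∫ t in b..b + Δ, ((⌊t / Δ⌋ : ℝ) + 1 / 2) :=
      intervalIntegral.integral_const_mul _ _
    _ = Δ * (Δ * ∫ x in b / Δ..b / Δ + 1, ((⌊x⌋ : ℝ) + 1 / 2)) := by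
      rw [intervalIntegral.integral_comp_div (fun x ↦ (⌊x⌋ : ℝ) + 1 / 2) hΔ, smul_eq_mul,
        add_div, div_self hΔ]
    _ = Δ * (Δ * (b / Δ + 1 / 2)) := by
      rw [intervalIntegral.integral_add (intervalIntegrable_floor volume _ _)
        intervalIntegrable_const, integral_floor_add_one, intervalIntegral.integral_const,
        add_sub_cancel_left, one_smul]
    _ = Δ * (b + Δ / 2) := by field_simp

theorem integral_uniformDither {E : Type*} [NormedAddCommGroup E] [NormedSpace ℝ E] {Δ : ℝ}
    (hΔ : 0 ≤ Δ) (f : ℝ → E) :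
    ∫ τ, f τ ∂(uniformDither Δ) = Δ⁻¹ • ∫ τ in -(Δ / 2)..Δ / 2, f τ := by
  rw [uniformDither, integral_smul_measure, ENNReal.toReal_inv, ENNReal.toReal_ofReal hΔ,
    integral_Icc_eq_integral_Ioc, intervalIntegral.integral_of_le (by linarith)]

/-- For `τ` uniform on `[-Δ/2, Δ/2]`, the dithered uniform quantizer is unbiased:
`E_τ[Q_Δ(a+τ)] = a`. -/
theorem dithered_quantizer_unbiased (Δ : ℝ) (hΔ : 0 < Δ) (a : ℝ) :
    ∫ τ, uniformQuantizer Δ (a + τ) ∂(uniformDither Δ) = a := by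
  calc
    ∫ τ, uniformQuantizer Δ (a + τ) ∂(uniformDither Δ)
        = Δ⁻¹ * ∫ τ in -(Δ / 2)..Δ / 2, uniformQuantizer Δ (a + τ) :=
      integral_uniformDither hΔ.le _
    _ = Δ⁻¹ * ∫ t in (a - Δ / 2)..(a - Δ / 2) + Δ, uniformQuantizer Δ t := by
      rw [intervalIntegral.integral_comp_add_left (uniformQuantizer Δ)]
      ring_nf
    _ = Δ⁻¹ * (Δ * a) := by
      rw [integral_uniformQuantizer_add_step hΔ.ne', sub_add_cancel]
    _ = a := inv_mul_cancel_left₀ hΔ.ne' a
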